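/- The energy of the bubble simplifies as E(U) = −(1/n)·|K|·∫_{ℝⁿ₊} U(x)^{2n/(n−2)} dx + H·∫_{ℝ^{n−1}} U(x̃, 0)^{2(n−1)/(n−2)} dx̃. -/

import Mathlib

open Real MeasureTheory

noncomputable section

/-- `αₙ = (4n(n−1))^((n−2)/4)`. -/
def alphaN (n : ℕ) : ℝ := (4 * (n : ℝ) * ((n : ℝ) - 1)) ^ (((n : ℝ) - 2) / 4)

/-- `cₙ = 4(n−1)/(n−2)`. -/
def cN (n : ℕ) : ℝ := 4 * ((n : ℝ) - 1) / ((n : ℝ) - 2)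

/-- Points of `ℝⁿ = ℝ^{n-1} × ℝ`, written as pairs `(y, xₙ)`. -/
abbrev HalfPt (n : ℕ) := (Fin (n - 1) → ℝ) × ℝ

/-- `|y|² + (xₙ + D)² − 1`. -/
def QD (n : ℕ) (D : ℝ) (x : HalfPt n) : ℝ := (∑ i, (x.1 i) ^ 2) + (x.2 + D) ^ 2 - 1

/-- The standard bubble `U(x) = αₙ |K|^{-(n-2)/4} (|y|² + (xₙ+D)² − 1)^{-(n-2)/2}`. -/
def bubbleU (n : ℕ) (K D : ℝ) (x : HalfPt n) : ℝ :=
  alphaN n * |K| ^ (-(((n : ℝ) - 2) / 4)) * QD n D x ^ (-(((n : ℝ) - 2) / 2))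

/-- Second directional derivative of `f` in the direction `v` at `x`. -/
def dd2 (n : ℕ) (f : HalfPt n → ℝ) (v : HalfPt n) (x : HalfPt n) : ℝ :=
  fderiv ℝ (fun y => fderiv ℝ f y v) x v

/-- Euclidean Laplacian: sum of the second partial derivatives along the coordinate
directions of `ℝ^{n-1} × ℝ`. -/
def lap (n : ℕ) (f : HalfPt n → ℝ) (x : HalfPt n) : ℝ :=
  (∑ i : Fin (n - 1), dd2 n f (Pi.single i 1, 0) x) + dd2 n f ((0 : Fin (n - 1) → ℝ), 1) x

/-- The bubble family `U_{δ,x₀(δ)}` with `x₀(δ) = (t, −Dδ)`. -/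
def bubbleFam (n : ℕ) (K D δ : ℝ) (t : Fin (n - 1) → ℝ) (x : HalfPt n) : ℝ :=
  alphaN n * |K| ^ (-(((n : ℝ) - 2) / 4)) * δ ^ (((n : ℝ) - 2) / 2) *
    ((∑ i, (x.1 i - t i) ^ 2) + (x.2 + D * δ) ^ 2 - δ ^ 2) ^ (-(((n : ℝ) - 2) / 2))

/-- `𝔧ᵢ`, `i = 1, …, n−1`: the tangential derivatives of the bubble. -/
def jTan (n : ℕ) (K D : ℝ) (i : Fin (n - 1)) (x : HalfPt n) : ℝ :=
  alphaN n * |K| ^ (-(((n : ℝ) - 2) / 4)) * (2 - (n : ℝ)) * x.1 i * QD n D x ^ (-((n : ℝ) / 2))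

/-- `𝔧ₙ`. -/
def jNor (n : ℕ) (K D : ℝ) (x : HalfPt n) : ℝ :=
  alphaN n * |K| ^ (-(((n : ℝ) - 2) / 4)) * (((n : ℝ) - 2) / 2) *
    ((∑ i, (x.1 i) ^ 2) + x.2 ^ 2 + 1 - D ^ 2) * QD n D x ^ (-((n : ℝ) / 2))

/-- All the `𝔧ᵢ`, `i = 1, …, n`, indexed by `Fin n`. -/
def jAll (n : ℕ) (K D : ℝ) (i : Fin n) (x : HalfPt n) : ℝ :=
  if h : (i : ℕ) < n - 1 then jTan n K D ⟨(i : ℕ), h⟩ x else jNor n K D x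

/-- `I^n_{n-1} = ∫₀^∞ ρⁿ (1+ρ²)^{-(n-1)} dρ`. -/
def Iconst (n : ℕ) : ℝ := ∫ ρ in Set.Ioi (0 : ℝ), ρ ^ n / (1 + ρ ^ 2) ^ (n - 1)

/-- `ω_{n-1}`: the `(n−2)`-dimensional Hausdorff measure of the unit sphere
`S^{n-2} ⊆ ℝ^{n-1}`. -/
def omegaN (n : ℕ) : ℝ :=
  (μH[(n : ℝ) - 2] (Metric.sphere (0 : EuclideanSpace ℝ (Fin (n - 1))) 1)).toReal

/-- `φ_m(D) = ∫_D^∞ (t²−1)^{−m} dt`. -/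
def phiFun (m D : ℝ) : ℝ := ∫ t in Set.Ioi D, (t ^ 2 - 1) ^ (-m)

/-- `|∇f(x)|²`, the squared Euclidean norm of the gradient. -/
def gradSq (n : ℕ) (f : HalfPt n → ℝ) (x : HalfPt n) : ℝ :=
  (∑ i : Fin (n - 1), (fderiv ℝ f x (Pi.single i 1, (0 : ℝ))) ^ 2) +
    (fderiv ℝ f x ((0 : Fin (n - 1) → ℝ), 1)) ^ 2

/-- The energy of the bubble. -/
def energyE (n : ℕ) (K H D : ℝ) : ℝ :=
  cN n / 2 * (∫ x in {x : HalfPt n | 0 < x.2}, gradSq n (bubbleU n K D) x) +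
    ((n : ℝ) - 2) / (2 * (n : ℝ)) * |K| *
      (∫ x in {x : HalfPt n | 0 < x.2}, bubbleU n K D x ^ (2 * (n : ℝ) / ((n : ℝ) - 2))) -
    ((n : ℝ) - 2) * H *
      (∫ y : Fin (n - 1) → ℝ, bubbleU n K D (y, 0) ^ (2 * ((n : ℝ) - 1) / ((n : ℝ) - 2)))

/-- The Euclidean norm `|x|` on `ℝ^{n-1} × ℝ`. -/
def enormE (n : ℕ) (x : HalfPt n) : ℝ := Real.sqrt ((∑ i, (x.1 i) ^ 2) + x.2 ^ 2)

/-- The source term `E_h`. -/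
def Ehsrc (n : ℕ) (K D : ℝ) (h : Fin (n - 1) → Fin (n - 1) → ℝ) (x : HalfPt n) : ℝ :=
  (8 * ((n : ℝ) - 1) / ((n : ℝ) - 2)) *
    (∑ i : Fin (n - 1), ∑ j : Fin (n - 1),
      h i j *
        fderiv ℝ (fun y => fderiv ℝ (bubbleU n K D) y (Pi.single j 1, (0 : ℝ))) x
          (Pi.single i 1, (0 : ℝ))) * x.2

lemma hasDerivAt_radial {k : ℕ} {D s t : ℝ} (hq : (t + D) ^ 2 * s - 1 ≠ 0) :
    HasDerivAt (fun t => (t + D) ^ (k + 1) / ((t + D) ^ 2 * s - 1) ^ k)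
      (-((t + D) ^ k * (((k : ℝ) - 1) / ((t + D) ^ 2 * s - 1) ^ k +
        2 * k / ((t + D) ^ 2 * s - 1) ^ (k + 1)))) t := by
  have h1 : HasDerivAt (fun t : ℝ => t + D) 1 t := (hasDerivAt_id t).add_const D
  have h2 := (h1.fun_pow (k + 1)).fun_div ((((h1.fun_pow 2).mul_const s).sub_const 1).fun_pow k)
    (pow_ne_zero k hq)
  refine h2.congr_deriv ?_
  rcases k with _ | k
  · simp
  · field_simp
    push_cast
    ring

lemma tendsto_radial {k : ℕ} (hk : 2 ≤ k) {D s : ℝ} (hD : 1 < D) (hs : 1 ≤ s) :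
    Filter.Tendsto (fun t => (t + D) ^ (k + 1) / ((t + D) ^ 2 * s - 1) ^ k)
      Filter.atTop (nhds 0) := by
  set c : ℝ := 1 - 1 / D ^ 2 with hc
  have hD2 : 1 < D ^ 2 := one_lt_pow₀ hD two_ne_zero
  have hc0 : 0 < c := by
    rw [hc, sub_pos, div_lt_one (by positivity)]
    exact hD2
  have hlim : Filter.Tendsto (fun t => (c ^ k)⁻¹ * (t + D)⁻¹) Filter.atTop (nhds 0) := by
    simpa using (tendsto_inv_atTop_zero.comp
      (Filter.tendsto_atTop_add_const_right _ D Filter.tendsto_id)).const_mul ((c ^ k)⁻¹)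
  have hbound : ∀ t : ℝ, 0 ≤ t → 0 < c * (t + D) ^ 2 ∧
      c * (t + D) ^ 2 ≤ (t + D) ^ 2 * s - 1 := by
    intro t ht
    refine ⟨by positivity, ?_⟩
    have h1 : 1 ≤ (t + D) ^ 2 / D ^ 2 := by
      rw [one_le_div (by positivity)]
      gcongr
      linarith
    have h2 : (t + D) ^ 2 ≤ (t + D) ^ 2 * s := le_mul_of_one_le_right (by positivity) hs
    have h3 : c * (t + D) ^ 2 = (t + D) ^ 2 - (t + D) ^ 2 / D ^ 2 := by
      rw [hc]; ring
    linarith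
  refine squeeze_zero' ?_ ?_ hlim
  · filter_upwards [Filter.eventually_ge_atTop 0] with t ht
    have := hbound t ht
    have : 0 < (t + D) ^ 2 * s - 1 := by linarith
    positivity
  · filter_upwards [Filter.eventually_ge_atTop 0] with t ht
    obtain ⟨h0, h1⟩ := hbound t ht
    have hpos : 0 < t + D := by linarith
    calc (t + D) ^ (k + 1) / ((t + D) ^ 2 * s - 1) ^ k
        ≤ (t + D) ^ (k + 1) / (c * (t + D) ^ 2) ^ k := by gcongr
      _ = (c ^ k)⁻¹ * ((t + D) ^ (k + 1) / (t + D) ^ (2 * k)) := by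
          rw [mul_pow, ← pow_mul]
          field_simp
      _ ≤ (c ^ k)⁻¹ * (t + D)⁻¹ := by
          gcongr
          rw [div_le_iff₀ (by positivity), inv_mul_eq_div, le_div_iff₀ hpos, ← pow_succ]
          exact pow_le_pow_right₀ (by linarith) (by omega)

lemma lintegral_radial {k : ℕ} (hk : 2 ≤ k) {D s : ℝ} (hD : 1 < D) (hs : 1 ≤ s) :
    ∫⁻ t in Set.Ioi (0 : ℝ), ENNReal.ofReal ((t + D) ^ k *
        (((k : ℝ) - 1) / ((t + D) ^ 2 * s - 1) ^ k + 2 * k / ((t + D) ^ 2 * s - 1) ^ (k + 1)))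
      = ENNReal.ofReal (D ^ (k + 1) / (D ^ 2 * s - 1) ^ k) := by
  have hq : ∀ t : ℝ, 0 ≤ t → 0 < (t + D) ^ 2 * s - 1 := by
    intro t ht
    have h1 : 1 < (t + D) ^ 2 := one_lt_pow₀ (by linarith) two_ne_zero
    nlinarith
  have hk1 : (0 : ℝ) ≤ k - 1 := by
    have : (2 : ℝ) ≤ k := by exact_mod_cast hk
    linarith
  have hnn : ∀ t ∈ Set.Ioi (0 : ℝ), 0 ≤ (t + D) ^ k *
      (((k : ℝ) - 1) / ((t + D) ^ 2 * s - 1) ^ k + 2 * k / ((t + D) ^ 2 * s - 1) ^ (k + 1)) := by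
    intro t ht
    have h1 := hq t (le_of_lt ht)
    have h2 : 0 < t + D := by linarith [Set.mem_Ioi.1 ht]
    positivity
  have hderiv := fun t (ht : t ∈ Set.Ici (0 : ℝ)) =>
    hasDerivAt_radial (k := k) (hq t ht).ne'
  have hint := integrableOn_Ioi_deriv_of_nonpos' hderiv
    (fun t ht => neg_nonpos.2 (hnn t ht)) (tendsto_radial hk hD hs)
  have hval := integral_Ioi_of_hasDerivAt_of_nonpos' hderiv
    (fun t ht => neg_nonpos.2 (hnn t ht)) (tendsto_radial hk hD hs)
  rw [← ofReal_integral_eq_lintegral_ofReal (by simpa [IntegrableOn] using hint.neg)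
    (ae_restrict_of_forall_mem measurableSet_Ioi hnn)]
  rw [integral_neg] at hval
  congr 1
  simpa using hval

lemma lintegral_eq_pow_mul_lintegral_smul {E : Type*} [NormedAddCommGroup E] [NormedSpace ℝ E]
    [FiniteDimensional ℝ E] [MeasurableSpace E] [BorelSpace E] (μ : Measure E)
    [μ.IsAddHaarMeasure] {r : ℝ} (hr : 0 < r) (f : E → ENNReal) :
    ∫⁻ y, f y ∂μ = ENNReal.ofReal (r ^ Module.finrank ℝ E) * ∫⁻ y, f (r • y) ∂μ := by
  have h := lintegral_map_equiv (μ := μ) f (Homeomorph.smulOfNeZero r hr.ne').toMeasurableEquiv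
  have hm : Measure.map (Homeomorph.smulOfNeZero r hr.ne' : E ≃ₜ E).toMeasurableEquiv μ
      = Measure.map (r • ·) μ := rfl
  rw [hm, Measure.map_addHaar_smul μ hr.ne', lintegral_smul_measure] at h
  have h' : ∫⁻ y, f (r • y) ∂μ
      = ENNReal.ofReal |(r ^ Module.finrank ℝ E)⁻¹| • ∫⁻ y, f y ∂μ := h.symm
  have hp : 0 < r ^ Module.finrank ℝ E := by positivity
  rw [h', smul_eq_mul, ← mul_assoc, ← ENNReal.ofReal_mul hp.le, abs_of_pos (inv_pos.2 hp),
    mul_inv_cancel₀ hp.ne', ENNReal.ofReal_one, one_mul]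

lemma measurable_QD (n : ℕ) (D : ℝ) : Measurable (QD n D) := by
  unfold QD
  fun_prop

lemma QD_pos {n : ℕ} {D : ℝ} (hD : 1 < D) {x : HalfPt n} (hx : 0 ≤ x.2) : 0 < QD n D x := by
  have h1 : 1 < (x.2 + D) ^ 2 := one_lt_pow₀ (by linarith) two_ne_zero
  have h2 : 0 ≤ ∑ i, (x.1 i) ^ 2 := Finset.sum_nonneg fun i _ => sq_nonneg _
  unfold QD
  linarith

lemma QD_smul (n : ℕ) (D t : ℝ) (y : Fin (n - 1) → ℝ) :
    QD n D ((t + D) • y, t) = (t + D) ^ 2 * (∑ i, y i ^ 2 + 1) - 1 := by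
  simp only [QD, Pi.smul_apply, smul_eq_mul, mul_pow, ← Finset.mul_sum]
  ring

lemma volume_restrict_halfSpace (n : ℕ) :
    (volume : Measure (HalfPt n)).restrict {x | 0 < x.2}
      = (volume : Measure (Fin (n - 1) → ℝ)).prod ((volume : Measure ℝ).restrict (Set.Ioi 0)) := by
  have h : {x : HalfPt n | 0 < x.2} = Set.univ ×ˢ Set.Ioi 0 := by
    ext x; simp
  rw [h, Measure.volume_eq_prod, ← Measure.prod_restrict, Measure.restrict_univ]

lemma lintegral_halfSpace_density {n : ℕ} (hn : 3 ≤ n) {D : ℝ} (hD : 1 < D) :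
    ∫⁻ x in {x : HalfPt n | 0 < x.2}, ENNReal.ofReal
        (((n : ℝ) - 2) / QD n D x ^ (n - 1) + (2 * (n : ℝ) - 2) / QD n D x ^ n)
      = ENNReal.ofReal D * ∫⁻ y : Fin (n - 1) → ℝ, ENNReal.ofReal (1 / QD n D (y, 0) ^ (n - 1)) := by
  have hQ := measurable_QD n D
  have hcast : ((n - 1 : ℕ) : ℝ) = n - 1 := by
    rw [Nat.cast_sub (by omega), Nat.cast_one]
  rw [volume_restrict_halfSpace, lintegral_prod_symm' _ (by fun_prop)]
  have hslice : ∀ t ∈ Set.Ioi (0 : ℝ), ∫⁻ y : Fin (n - 1) → ℝ, ENNReal.ofReal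
        (((n : ℝ) - 2) / QD n D (y, t) ^ (n - 1) + (2 * (n : ℝ) - 2) / QD n D (y, t) ^ n)
      = ∫⁻ y : Fin (n - 1) → ℝ, ENNReal.ofReal ((t + D) ^ (n - 1) *
        ((((n - 1 : ℕ) : ℝ) - 1) / ((t + D) ^ 2 * (∑ i, y i ^ 2 + 1) - 1) ^ (n - 1) +
          2 * ((n - 1 : ℕ) : ℝ) / ((t + D) ^ 2 * (∑ i, y i ^ 2 + 1) - 1) ^ (n - 1 + 1))) := by
    intro t ht
    have hr : 0 < t + D := by linarith [Set.mem_Ioi.1 ht]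
    rw [lintegral_eq_pow_mul_lintegral_smul volume hr, ← lintegral_const_mul _ (by fun_prop)]
    refine lintegral_congr fun y => ?_
    rw [← ENNReal.ofReal_mul (by positivity), Module.finrank_fin_fun, QD_smul, hcast,
      Nat.sub_add_cancel (by omega : 1 ≤ n)]
    congr 2
    ring
  rw [setLIntegral_congr_fun measurableSet_Ioi hslice, lintegral_lintegral_swap (by fun_prop)]
  rw [lintegral_eq_pow_mul_lintegral_smul volume (by linarith : 0 < D)
      fun y => ENNReal.ofReal (1 / QD n D (y, 0) ^ (n - 1)),
    ← lintegral_const_mul _ (by fun_prop), ← lintegral_const_mul _ (by fun_prop)]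
  refine lintegral_congr fun y => ?_
  rw [lintegral_radial (by omega) hD
    (le_add_of_nonneg_left (Finset.sum_nonneg fun i _ => sq_nonneg _)),
    ← ENNReal.ofReal_mul (by positivity), ← ENNReal.ofReal_mul (by positivity),
    Module.finrank_fin_fun]
  have h := QD_smul n D 0 y
  rw [zero_add] at h
  rw [h, pow_succ]
  congr 1
  ring

lemma integrable_boundary {n : ℕ} (hn : 3 ≤ n) {D : ℝ} (hD : 1 < D) :
    Integrable fun y : Fin (n - 1) → ℝ => 1 / QD n D (y, 0) ^ (n - 1) := by
  have hQ := measurable_QD n D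
  have hD2 : 1 < D ^ 2 := one_lt_pow₀ hD two_ne_zero
  have hcast : (1 : ℝ) ≤ (n - 1 : ℕ) := by exact_mod_cast (by omega : 1 ≤ n - 1)
  set ε : ℝ := min 1 (D ^ 2 - 1) with hε
  have hε0 : 0 < ε := lt_min one_pos (by linarith)
  have hI := (integrable_rpow_neg_one_add_norm_sq (E := Fin (n - 1) → ℝ) (μ := volume)
    (r := 2 * (n - 1 : ℕ)) (by rw [Module.finrank_fin_fun]; linarith)).const_mul ((ε ^ (n - 1))⁻¹)
  refine hI.mono' (Measurable.aestronglyMeasurable (by fun_prop))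
    (Filter.Eventually.of_forall fun y => ?_)
  have hnorm : ‖y‖ ^ 2 ≤ ∑ i, y i ^ 2 := by
    have hs : 0 ≤ ∑ i, y i ^ 2 := Finset.sum_nonneg fun i _ => sq_nonneg _
    rw [← Real.le_sqrt (norm_nonneg y) hs, pi_norm_le_iff_of_nonneg (Real.sqrt_nonneg _)]
    exact fun i => Real.abs_le_sqrt
      (Finset.single_le_sum (f := fun i => y i ^ 2) (fun j _ => sq_nonneg _) (Finset.mem_univ i))
  have hlow : ε * (1 + ‖y‖ ^ 2) ≤ QD n D (y, 0) := by
    have h1 : ε ≤ 1 := min_le_left _ _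
    have h2 : ε ≤ D ^ 2 - 1 := min_le_right _ _
    have h3 : ε * ‖y‖ ^ 2 ≤ ‖y‖ ^ 2 := mul_le_of_le_one_left (by positivity) h1
    simp only [QD, zero_add]
    linarith
  have hpos : 0 < QD n D (y, 0) := QD_pos hD le_rfl
  rw [Real.norm_of_nonneg (by positivity)]
  calc 1 / QD n D (y, 0) ^ (n - 1) ≤ 1 / (ε * (1 + ‖y‖ ^ 2)) ^ (n - 1) := by gcongr
    _ = (ε ^ (n - 1))⁻¹ * (1 + ‖y‖ ^ 2) ^ (-(2 * ((n - 1 : ℕ) : ℝ)) / 2) := by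
      rw [show -(2 * ((n - 1 : ℕ) : ℝ)) / 2 = -((n - 1 : ℕ) : ℝ) by ring,
        Real.rpow_neg (by positivity), Real.rpow_natCast, mul_pow]
      field_simp

lemma integral_halfSpace_identity {n : ℕ} (hn : 3 ≤ n) {D : ℝ} (hD : 1 < D) :
    IntegrableOn (fun x : HalfPt n => 1 / QD n D x ^ (n - 1)) {x | 0 < x.2} ∧
    IntegrableOn (fun x : HalfPt n => 1 / QD n D x ^ n) {x | 0 < x.2} ∧
    ((n : ℝ) - 2) * (∫ x in {x : HalfPt n | 0 < x.2}, 1 / QD n D x ^ (n - 1)) +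
      (2 * (n : ℝ) - 2) * (∫ x in {x : HalfPt n | 0 < x.2}, 1 / QD n D x ^ n)
      = D * ∫ y : Fin (n - 1) → ℝ, 1 / QD n D (y, 0) ^ (n - 1) := by
  have hQ := measurable_QD n D
  have hn' : (3 : ℝ) ≤ n := by exact_mod_cast hn
  have hmeas : MeasurableSet {x : HalfPt n | 0 < x.2} :=
    measurableSet_lt measurable_const measurable_snd
  have hpos : ∀ x ∈ {x : HalfPt n | 0 < x.2}, 0 < QD n D x := fun x hx => QD_pos hD (le_of_lt hx)
  have hn2 : (0 : ℝ) < n - 2 := by linarith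
  have hn1 : (0 : ℝ) < 2 * n - 2 := by linarith
  have hnn : ∀ x ∈ {x : HalfPt n | 0 < x.2},
      0 ≤ ((n : ℝ) - 2) / QD n D x ^ (n - 1) + (2 * (n : ℝ) - 2) / QD n D x ^ n := by
    intro x hx
    have := hpos x hx
    positivity
  have hbd := integrable_boundary hn hD
  have hbd0 : ∀ y : Fin (n - 1) → ℝ, 0 ≤ 1 / QD n D (y, 0) ^ (n - 1) := by
    intro y
    have : 0 < QD n D (y, 0) := QD_pos hD le_rfl
    positivity
  have hL := lintegral_halfSpace_density hn hD
  rw [← ofReal_integral_eq_lintegral_ofReal hbd (Filter.Eventually.of_forall hbd0),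
    ← ENNReal.ofReal_mul (by linarith)] at hL
  have hint : IntegrableOn (fun x : HalfPt n =>
      ((n : ℝ) - 2) / QD n D x ^ (n - 1) + (2 * (n : ℝ) - 2) / QD n D x ^ n) {x | 0 < x.2} := by
    refine ⟨Measurable.aestronglyMeasurable (by fun_prop), ?_⟩
    rw [hasFiniteIntegral_iff_ofReal (ae_restrict_of_forall_mem hmeas hnn), hL]
    exact ENNReal.ofReal_lt_top
  have hA : IntegrableOn (fun x : HalfPt n => 1 / QD n D x ^ (n - 1)) {x | 0 < x.2} := by
    refine (hint.const_mul ((n : ℝ) - 2)⁻¹).mono' (Measurable.aestronglyMeasurable (by fun_prop))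
      (ae_restrict_of_forall_mem hmeas fun x hx => ?_)
    have := hpos x hx
    rw [Real.norm_of_nonneg (by positivity), ← div_eq_inv_mul, le_div_iff₀ hn2, one_div_mul_eq_div]
    exact le_add_of_nonneg_right (by positivity)
  have hB : IntegrableOn (fun x : HalfPt n => 1 / QD n D x ^ n) {x | 0 < x.2} := by
    refine (hint.const_mul (2 * (n : ℝ) - 2)⁻¹).mono'
      (Measurable.aestronglyMeasurable (by fun_prop))
      (ae_restrict_of_forall_mem hmeas fun x hx => ?_)
    have := hpos x hx
    rw [Real.norm_of_nonneg (by positivity), ← div_eq_inv_mul, le_div_iff₀ hn1, one_div_mul_eq_div]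
    exact le_add_of_nonneg_left (by positivity)
  refine ⟨hA, hB, ?_⟩
  rw [← ofReal_integral_eq_lintegral_ofReal hint (ae_restrict_of_forall_mem hmeas hnn),
    ENNReal.ofReal_eq_ofReal_iff (setIntegral_nonneg hmeas hnn)
      (mul_nonneg (by linarith) (integral_nonneg hbd0))] at hL
  rw [← hL, ← integral_const_mul, ← integral_const_mul,
    ← integral_add (hA.const_mul _) (hB.const_mul _)]
  simp only [mul_one_div]

/-- The multiplicative constant `αₙ |K|^{-(n-2)/4}` of the bubble. -/
def bubbleConst (n : ℕ) (K : ℝ) : ℝ := alphaN n * |K| ^ (-(((n : ℝ) - 2) / 4))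

lemma bubbleConst_eq {n : ℕ} (hn : 3 ≤ n) {K : ℝ} (hK : K < 0) :
    bubbleConst n K = (4 * n * ((n : ℝ) - 1) / |K|) ^ (((n : ℝ) - 2) / 4) := by
  have hn' : (3 : ℝ) ≤ n := by exact_mod_cast hn
  have hK' : 0 < |K| := abs_pos.2 hK.ne
  have h0 : (0 : ℝ) ≤ 4 * n * ((n : ℝ) - 1) := mul_nonneg (by positivity) (by linarith)
  rw [bubbleConst, alphaN, Real.rpow_neg hK'.le, Real.div_rpow h0 hK'.le]
  rfl

lemma hasFDerivAt_QD (n : ℕ) (D : ℝ) (x : HalfPt n) :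
    HasFDerivAt (QD n D)
      ((∑ i, (2 * x.1 i) • ((ContinuousLinearMap.proj i).comp
          (ContinuousLinearMap.fst ℝ (Fin (n - 1) → ℝ) ℝ))) +
        (2 * (x.2 + D)) • ContinuousLinearMap.snd ℝ (Fin (n - 1) → ℝ) ℝ) x := by
  have h1 : ∀ i : Fin (n - 1), HasFDerivAt (fun x : HalfPt n => x.1 i ^ 2)
      ((2 * x.1 i) • ((ContinuousLinearMap.proj i).comp
          (ContinuousLinearMap.fst ℝ (Fin (n - 1) → ℝ) ℝ))) x := by
    intro i
    have h := (((ContinuousLinearMap.proj (R := ℝ) (φ := fun _ : Fin (n - 1) => ℝ) i).comp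
      (ContinuousLinearMap.fst ℝ (Fin (n - 1) → ℝ) ℝ)).hasFDerivAt (x := x)).pow 2
    simpa using h
  have h2 : HasFDerivAt (fun x : HalfPt n => (x.2 + D) ^ 2)
      ((2 * (x.2 + D)) • ContinuousLinearMap.snd ℝ (Fin (n - 1) → ℝ) ℝ) x := by
    have h := (((ContinuousLinearMap.snd ℝ (Fin (n - 1) → ℝ) ℝ).hasFDerivAt
      (x := x)).add_const D).pow 2
    simpa [mul_add] using h
  exact ((HasFDerivAt.fun_sum fun i _ => h1 i).add h2).sub_const 1

lemma gradSq_bubbleU {n : ℕ} (hn : 3 ≤ n) {K D : ℝ} (hD : 1 < D) {x : HalfPt n} (hx : 0 < x.2) :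
    gradSq n (bubbleU n K D) x = bubbleConst n K ^ 2 * ((n : ℝ) - 2) ^ 2 *
      (1 / QD n D x ^ (n - 1) + 1 / QD n D x ^ n) := by
  have hpos := QD_pos hD hx.le
  set r : ℝ := -(((n : ℝ) - 2) / 2) with hr
  have hf := ((hasFDerivAt_QD n D x).rpow_const (p := r) (Or.inl hpos.ne')).const_mul
    (bubbleConst n K)
  have hfd : fderiv ℝ (bubbleU n K D) x = _ := hf.fderiv
  have hsq : (QD n D x ^ (r - 1)) ^ 2 = 1 / QD n D x ^ n := by
    rw [← Real.rpow_natCast, ← Real.rpow_mul hpos.le,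
      show (r - 1) * ((2 : ℕ) : ℝ) = -(n : ℝ) by rw [hr]; push_cast; ring,
      Real.rpow_neg hpos.le, Real.rpow_natCast, one_div]
  have hstep : 1 / QD n D x ^ (n - 1) = QD n D x * (1 / QD n D x ^ n) := by
    obtain ⟨k, rfl⟩ : ∃ k, n = k + 1 := ⟨n - 1, by omega⟩
    rw [Nat.add_sub_cancel, pow_succ]
    field_simp
  have hsum : QD n D x + 1 = (∑ i, x.1 i ^ 2) + (x.2 + D) ^ 2 := by
    unfold QD; ring
  have htan : ∀ i : Fin (n - 1), fderiv ℝ (bubbleU n K D) x (Pi.single i 1, (0 : ℝ))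
      = bubbleConst n K * r * QD n D x ^ (r - 1) * 2 * x.1 i := by
    intro i
    rw [hfd]
    simp [Pi.single_apply]
    ring
  have hnor : fderiv ℝ (bubbleU n K D) x ((0 : Fin (n - 1) → ℝ), 1)
      = bubbleConst n K * r * QD n D x ^ (r - 1) * 2 * (x.2 + D) := by
    rw [hfd]
    simp
    ring
  simp only [gradSq, htan, hnor, mul_pow _ (x.1 _), mul_pow _ (x.2 + D), ← Finset.mul_sum]
  rw [← mul_add, ← hsum, hstep]
  simp only [mul_pow, hsq]
  rw [hr]
  ring

lemma bubbleU_rpow {n m : ℕ} (hn : 3 ≤ n) {K D : ℝ} (hK : K < 0) (hD : 1 < D) {x : HalfPt n}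
    (hx : 0 ≤ x.2) :
    bubbleU n K D x ^ (2 * (m : ℝ) / ((n : ℝ) - 2))
      = (4 * n * ((n : ℝ) - 1) / |K|) ^ ((m : ℝ) / 2) * (1 / QD n D x ^ m) := by
  have hpos := QD_pos hD hx
  have hn' : (3 : ℝ) ≤ n := by exact_mod_cast hn
  have hn2 : (n : ℝ) - 2 ≠ 0 := by linarith
  have hn1 : (0 : ℝ) ≤ n - 1 := by linarith
  have h0 : 0 ≤ 4 * n * ((n : ℝ) - 1) / |K| := by positivity
  change (bubbleConst n K * _) ^ _ = _
  rw [bubbleConst_eq hn hK, Real.mul_rpow (by positivity) (by positivity), ← Real.rpow_mul h0,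
    ← Real.rpow_mul hpos.le,
    show ((n : ℝ) - 2) / 4 * (2 * (m : ℝ) / ((n : ℝ) - 2)) = (m : ℝ) / 2 by field_simp; ring,
    show -(((n : ℝ) - 2) / 2) * (2 * (m : ℝ) / ((n : ℝ) - 2)) = -(m : ℝ) by field_simp,
    Real.rpow_neg hpos.le, Real.rpow_natCast, one_div]

theorem bubble_energy_simplification
    (n : ℕ) (hn : 4 ≤ n) (K H D : ℝ) (hK : K < 0) (hH : 0 < H)
    (hD : D = Real.sqrt ((n : ℝ) * ((n : ℝ) - 1)) * H / Real.sqrt |K|) (hD1 : 1 < D) :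
    energyE n K H D
      = -(1 / (n : ℝ)) * |K| *
            (∫ x in {x : HalfPt n | 0 < x.2}, bubbleU n K D x ^ (2 * (n : ℝ) / ((n : ℝ) - 2)))
          + H *
            (∫ y : Fin (n - 1) → ℝ,
              bubbleU n K D (y, 0) ^ (2 * ((n : ℝ) - 1) / ((n : ℝ) - 2))) := by
  have hn3 : 3 ≤ n := by omega
  have hn' : (4 : ℝ) ≤ n := by exact_mod_cast hn
  have hn2 : (n : ℝ) - 2 ≠ 0 := by linarith
  have hn0 : (n : ℝ) ≠ 0 := by linarith
  have hn1 : (0 : ℝ) < n - 1 := by linarith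
  have hK' : 0 < |K| := abs_pos.2 hK.ne
  have hcast : ((n - 1 : ℕ) : ℝ) = n - 1 := by
    rw [Nat.cast_sub (by omega), Nat.cast_one]
  have hmeas : MeasurableSet {x : HalfPt n | 0 < x.2} :=
    measurableSet_lt measurable_const measurable_snd
  obtain ⟨hA, hB, hAB⟩ := integral_halfSpace_identity hn3 hD1
  have hgrad : (∫ x in {x : HalfPt n | 0 < x.2}, gradSq n (bubbleU n K D) x)
      = bubbleConst n K ^ 2 * ((n : ℝ) - 2) ^ 2 *
        ((∫ x in {x : HalfPt n | 0 < x.2}, 1 / QD n D x ^ (n - 1)) +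
          ∫ x in {x : HalfPt n | 0 < x.2}, 1 / QD n D x ^ n) := by
    rw [setIntegral_congr_fun hmeas fun x hx => gradSq_bubbleU hn3 hD1 hx, integral_const_mul,
      integral_add hA hB]
  have hvol : (∫ x in {x : HalfPt n | 0 < x.2},
        bubbleU n K D x ^ (2 * (n : ℝ) / ((n : ℝ) - 2)))
      = (4 * n * ((n : ℝ) - 1) / |K|) ^ ((n : ℝ) / 2) *
        ∫ x in {x : HalfPt n | 0 < x.2}, 1 / QD n D x ^ n := by
    rw [setIntegral_congr_fun hmeas fun x hx => bubbleU_rpow hn3 hK hD1 (le_of_lt hx),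
      integral_const_mul]
  have hbdry : (∫ y : Fin (n - 1) → ℝ,
        bubbleU n K D (y, 0) ^ (2 * ((n : ℝ) - 1) / ((n : ℝ) - 2)))
      = (4 * n * ((n : ℝ) - 1) / |K|) ^ (((n : ℝ) - 1) / 2) *
        ∫ y : Fin (n - 1) → ℝ, 1 / QD n D (y, 0) ^ (n - 1) := by
    rw [← integral_const_mul]
    refine integral_congr_ae (Filter.Eventually.of_forall fun y => ?_)
    have h := bubbleU_rpow (m := n - 1) hn3 hK hD1 (x := (y, 0)) le_rfl
    rwa [hcast] at h
  set M : ℝ := 4 * n * ((n : ℝ) - 1) / |K| with hM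
  have hM0 : 0 < M := by positivity
  have hc2 : bubbleConst n K ^ 2 = M ^ (((n : ℝ) - 2) / 2) := by
    rw [bubbleConst_eq hn3 hK, ← Real.rpow_natCast, ← Real.rpow_mul hM0.le]
    congr 1
    push_cast
    ring
  have hMvol : M ^ ((n : ℝ) / 2) = M ^ (((n : ℝ) - 2) / 2) * M := by
    rw [← Real.rpow_add_one hM0.ne']
    congr 1
    ring
  have hMbdry : H * M ^ (((n : ℝ) - 1) / 2) = M ^ (((n : ℝ) - 2) / 2) * (2 * D) := by
    have h1 : M ^ (((n : ℝ) - 1) / 2) = M ^ (((n : ℝ) - 2) / 2) * Real.sqrt M := by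
      rw [Real.sqrt_eq_rpow, ← Real.rpow_add hM0]
      congr 1
      ring
    have h2 : Real.sqrt M = 2 * (Real.sqrt ((n : ℝ) * ((n : ℝ) - 1)) / Real.sqrt |K|) := by
      rw [← Real.sqrt_div (by positivity), hM,
        show 4 * n * ((n : ℝ) - 1) / |K| = 2 ^ 2 * ((n : ℝ) * ((n : ℝ) - 1) / |K|) by ring,
        Real.sqrt_mul (by norm_num), Real.sqrt_sq (by norm_num)]
    rw [h1, h2, hD]
    ring
  have hMK : |K| * M = 4 * n * ((n : ℝ) - 1) := by
    rw [hM]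
    field_simp
  rw [energyE, hgrad, hvol, hbdry, hc2, hMvol, cN]
  generalize (∫ x in {x : HalfPt n | 0 < x.2}, 1 / QD n D x ^ (n - 1)) = A at hAB ⊢
  generalize (∫ x in {x : HalfPt n | 0 < x.2}, 1 / QD n D x ^ n) = B at hAB ⊢
  generalize (∫ y : Fin (n - 1) → ℝ, 1 / QD n D (y, 0) ^ (n - 1)) = C at hAB ⊢
  generalize M ^ (((n : ℝ) - 2) / 2) = c at hMbdry ⊢
  generalize M ^ (((n : ℝ) - 1) / 2) = b at hMbdry ⊢
  have hfrac : 4 * ((n : ℝ) - 1) / ((n : ℝ) - 2) / 2 * (c * ((n : ℝ) - 2) ^ 2 * (A + B))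
      = 2 * ((n : ℝ) - 1) * ((n : ℝ) - 2) * c * (A + B) := by
    field_simp
    ring
  have hfrac2 : ((n : ℝ) - 2) / (2 * (n : ℝ)) * |K| * (c * M * B)
      = 2 * ((n : ℝ) - 2) * ((n : ℝ) - 1) * (c * B) := by
    rw [show ((n : ℝ) - 2) / (2 * (n : ℝ)) * |K| * (c * M * B)
      = ((n : ℝ) - 2) / (2 * (n : ℝ)) * (|K| * M) * (c * B) by ring, hMK]
    field_simp
    ring
  have hfrac3 : -(1 / (n : ℝ)) * |K| * (c * M * B) = -(4 * ((n : ℝ) - 1)) * (c * B) := by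
    rw [show -(1 / (n : ℝ)) * |K| * (c * M * B)
      = -(1 / (n : ℝ)) * (|K| * M) * (c * B) by ring, hMK]
    field_simp
  rw [hfrac, hfrac2, hfrac3]
  linear_combination (2 * ((n : ℝ) - 1) * c) * hAB - ((n : ℝ) - 1) * C * hMbdry
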